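/- There is a constant C = C(d) > 0 such that for every u₀ ∈ L²(ℝ^d), every T > 0 and every r > 0, the heat solution u with initial datum u₀ (which is smooth in x for t>0) satisfies (Σ_{n∈ℤ^d} (sup_{x∈Q_r(rn)} |∇_x u(T,x)|)² )^{1/2} ≤ C (1 + (T r^{-2})^{d/4}) T^{-d/4 − 1/2} ‖u₀‖. -/

import Mathlib

open MeasureTheory Filter Topology Metric ENNReal NNReal

noncomputable section

/-- `sinc` with value 1 at 0. -/
def sinc' (x : ℝ) : ℝ := if x = 0 then 1 else Real.sin x / x

/-- The function `f_{N,n}(x) = ∏_j sin (π (N x_j - n_j)) / (π (N x_j - n_j))`. -/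
def fN (d : ℕ) (N : ℝ) (n : Fin d → ℤ) (x : EuclideanSpace ℝ (Fin d)) : ℝ :=
  ∏ j, sinc' (Real.pi * (N * x j - n j))

/-- The lattice point `n / N` in `ℝ^d`. -/
def latticePt (d : ℕ) (N : ℝ) (n : Fin d → ℤ) : EuclideanSpace ℝ (Fin d) :=
  WithLp.toLp 2 fun j => (n j : ℝ) / N

/-- The heat solution at time `t > 0` with initial datum `u₀ ∈ L²(ℝ^d)`:
`u(t,x) = (4πt)^{-d/2} ∫ e^{-|x-y|²/(4t)} u₀(y) dy`. -/
def heatSol (d : ℕ) (u₀ : EuclideanSpace ℝ (Fin d) → ℝ) (t : ℝ)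
    (x : EuclideanSpace ℝ (Fin d)) : ℝ :=
  (4 * Real.pi * t) ^ (-(d : ℝ) / 2) * ∫ y, Real.exp (-‖x - y‖ ^ 2 / (4 * t)) * u₀ y

/-- The family `F` is summable in `L²(ℝ^d)` with sum `g`: the finite partial sums
converge to `g` in the `L²` norm along the filter of finite subsets of `ℤ^d`. -/
def HasSumL2 (d : ℕ) {V : Type} [NormedAddCommGroup V]
    (F : (Fin d → ℤ) → EuclideanSpace ℝ (Fin d) → V)
    (g : EuclideanSpace ℝ (Fin d) → V) : Prop :=
  Tendsto (fun s : Finset (Fin d → ℤ) =>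
    eLpNorm (fun x => g x - ∑ n ∈ s, F n x) 2 volume) atTop (𝓝 0)

/-- The closed cube `Q_r(0)` in `ℝ^d`, centered at the origin, of side length `2r`. -/
def Qcube (d : ℕ) (r : ℝ) : Set (EuclideanSpace ℝ (Fin d)) := {ξ | ∀ j, |ξ j| ≤ r}

/-- The truncated Fourier integral, with the paper's normalization
`(2π)^{-d/2} ∫_{|x| ≤ R} e^{-i x·ξ} f(x) dx`. -/
def truncFT (d : ℕ) (f : EuclideanSpace ℝ (Fin d) → ℂ) (R : ℝ)
    (ξ : EuclideanSpace ℝ (Fin d)) : ℂ :=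
  (((2 * Real.pi) ^ (-(d : ℝ) / 2) : ℝ) : ℂ) *
    ∫ x in closedBall (0 : EuclideanSpace ℝ (Fin d)) R,
      Complex.exp (-(Complex.I * ((inner ℝ x ξ : ℝ) : ℂ))) * f x

/-- `fhat` is the Fourier transform of `f ∈ L²(ℝ^d)` in the `L²` (Plancherel) sense:
`fhat ∈ L²` and the Fourier integrals of the truncations of `f` converge to `fhat`
in the `L²` norm. -/
def IsL2Fourier (d : ℕ) (f fhat : EuclideanSpace ℝ (Fin d) → ℂ) : Prop :=
  MemLp fhat 2 volume ∧
    Tendsto (fun R : ℝ => eLpNorm (fun ξ => fhat ξ - truncFT d f R ξ) 2 volume)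
      atTop (𝓝 0)

/-- The `L²(ℝ^d)` norm of a function, as a real number. -/
def l2norm (d : ℕ) {V : Type} [NormedAddCommGroup V]
    (f : EuclideanSpace ℝ (Fin d) → V) : ℝ :=
  (eLpNorm f 2 volume).toReal

/-! The gradient falls on the heat kernel `K_T`, and a Gaussian absorbs a linear factor at the price
of doubling its time: `|∇K_T| ≤ 2^{d/2} T^{-1/2} K_{2T}`. Since `K_{2T}` is a probability density,
the Cauchy–Schwarz inequality gives `|∇u(T)|² ≤ 2^d T⁻¹ K_{2T} * |u₀|²`. By the parabolic Harnack
inequality, the supremum of `K_{2T} * |u₀|²` over a cube is controlled by its values at the later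
time `2T + r²` on a lattice cell meeting that cube, hence by their average over the cell. The cells
are disjoint, so summing the averages leaves the total mass `‖u₀‖²`, which the heat flow preserves.
-/

open scoped Real

/-! ### Inequalities for suprema, integrals and powers -/

lemma one_add_rpow_le_two_rpow_mul {a p : ℝ} (ha : 0 ≤ a) (hp : 0 ≤ p) :
    (1 + a) ^ p ≤ 2 ^ p * (1 + a ^ p) := by
  have hmax : (max 1 a) ^ p ≤ 1 + a ^ p := by
    rcases le_total 1 a with h | h
    · rw [max_eq_right h]; linarith
    · rw [max_eq_left h, Real.one_rpow]; linarith [Real.rpow_nonneg ha p]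
  calc (1 + a) ^ p ≤ (2 * max 1 a) ^ p := by
        gcongr
        linarith [le_max_left 1 a, le_max_right 1 a]
    _ = 2 ^ p * (max 1 a) ^ p := Real.mul_rpow two_pos.le (by positivity)
    _ ≤ 2 ^ p * (1 + a ^ p) := by gcongr

section General

variable {α : Type*}

/-- The real supremum is `0` on an unbounded family, so no boundedness is needed. -/
lemma ofReal_biSup_le (S : Set α) (f : α → ℝ) :
    ENNReal.ofReal (⨆ x ∈ S, f x) ≤ ⨆ x ∈ S, ENNReal.ofReal (f x) := by
  by_cases htop : ⨆ x ∈ S, ENNReal.ofReal (f x) = ⊤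
  · exact htop ▸ le_top
  rw [ENNReal.ofReal_le_iff_le_toReal htop]
  refine Real.iSup_le (fun x => Real.iSup_le (fun hx => ?_) toReal_nonneg) toReal_nonneg
  rw [← ENNReal.ofReal_le_iff_le_toReal htop]
  exact le_iSup₂ (f := fun x (_ : x ∈ S) => ENNReal.ofReal (f x)) x hx

variable [MeasurableSpace α] {μ : Measure α}

lemma sq_lintegral_mul_le {w f : α → ℝ≥0∞} (hw : AEMeasurable w μ) (hf : AEMeasurable f μ) :
    (∫⁻ a, w a * f a ∂μ) ^ 2 ≤ (∫⁻ a, w a ∂μ) * ∫⁻ a, w a * f a ^ 2 ∂μ := by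
  have hsqrt (z : ℝ≥0∞) : (z ^ 2) ^ (1 / 2 : ℝ) = z := by
    rw [← ENNReal.rpow_two, ← ENNReal.rpow_mul]; norm_num
  have hsq (z : ℝ≥0∞) : (z ^ (1 / 2 : ℝ)) ^ 2 = z := by
    rw [← ENNReal.rpow_two, ← ENNReal.rpow_mul]; norm_num
  have hsplit (a : α) : w a * f a = w a ^ (1 / 2 : ℝ) * (w a * f a ^ 2) ^ (1 / 2 : ℝ) := by
    rw [← ENNReal.mul_rpow_of_nonneg _ _ (by norm_num), ← mul_assoc, ← sq, ← mul_pow, hsqrt]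
  simp only [hsplit]
  calc (∫⁻ a, w a ^ (1 / 2 : ℝ) * (w a * f a ^ 2) ^ (1 / 2 : ℝ) ∂μ) ^ 2
      ≤ ((∫⁻ a, w a ∂μ) ^ (1 / 2 : ℝ) * (∫⁻ a, w a * f a ^ 2 ∂μ) ^ (1 / 2 : ℝ)) ^ 2 := by
        gcongr
        exact ENNReal.lintegral_mul_norm_pow_le hw (hw.mul (hf.pow_const 2))
          (by norm_num) (by norm_num) (by norm_num)
    _ = (∫⁻ a, w a ∂μ) * ∫⁻ a, w a * f a ^ 2 ∂μ := by rw [mul_pow, hsq, hsq]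

lemma tsum_mul_measure_le_lintegral {ι : Type*} [Countable ι] {s : ι → Set α}
    (hs : ∀ i, MeasurableSet (s i)) (hd : Pairwise (Function.onFun Disjoint s))
    {a : ι → ℝ≥0∞} {g : α → ℝ≥0∞} (hag : ∀ i, ∀ x ∈ s i, a i ≤ g x) :
    ∑' i, a i * μ (s i) ≤ ∫⁻ x, g x ∂μ :=
  calc ∑' i, a i * μ (s i) = ∑' i, ∫⁻ _ in s i, a i ∂μ := by simp only [setLIntegral_const]
    _ ≤ ∑' i, ∫⁻ x in s i, g x ∂μ :=
        ENNReal.tsum_le_tsum fun i => setLIntegral_mono' (hs i) (hag i)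
    _ = ∫⁻ x in ⋃ i, s i, g x ∂μ := (lintegral_iUnion hs hd g).symm
    _ ≤ ∫⁻ x, g x ∂μ := setLIntegral_le_lintegral _ _

end General

/-! ### The heat kernel -/

section HeatKernel

variable {E : Type*} [NormedAddCommGroup E]

/-- The Gaussian `(4πt)^{-n/2} e^{-‖z‖²/(4t)}` on a space of dimension `n`, i.e. the fundamental
solution of the heat equation at time `t > 0`. -/
def heatKernel [NormedSpace ℝ E] (t : ℝ) (z : E) : ℝ :=
  (4 * π * t) ^ (-(Module.finrank ℝ E : ℝ) / 2) * Real.exp (-‖z‖ ^ 2 / (4 * t))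

section NormedSpace

variable [NormedSpace ℝ E] {s t : ℝ}

lemma heatKernel_pos (ht : 0 < t) (z : E) : 0 < heatKernel t z := by
  unfold heatKernel; positivity

lemma heatKernel_le_heatKernel_zero (ht : 0 < t) (z : E) :
    heatKernel t z ≤ heatKernel t (0 : E) := by
  unfold heatKernel
  gcongr
  simp

@[fun_prop]
lemma continuous_heatKernel : Continuous (heatKernel (E := E) t) := by
  unfold heatKernel; fun_prop

lemma heatKernel_le_rpow_mul_exp_mul_heatKernel (hs : 0 < s) (hst : s < t) (x y : E) :
    heatKernel s x ≤ (t / s) ^ ((Module.finrank ℝ E : ℝ) / 2)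
      * Real.exp (‖x - y‖ ^ 2 / (4 * (t - s))) * heatKernel t y := by
  have ht : 0 < t := hs.trans hst
  have htri : ‖y‖ ≤ ‖x‖ + ‖x - y‖ := norm_le_norm_add_norm_sub x y
  have hsedrakyan : ‖y‖ ^ 2 / t ≤ ‖x‖ ^ 2 / s + ‖x - y‖ ^ 2 / (t - s) := by
    have h := Finset.univ.sq_sum_div_le_sum_sq_div ![‖x‖, ‖x - y‖] (g := ![s, t - s])
      (by simp [Fin.forall_fin_two, hs, hst])
    simp only [Fin.sum_univ_two, Matrix.cons_val_zero, Matrix.cons_val_one,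
      add_sub_cancel] at h
    exact (by gcongr : ‖y‖ ^ 2 / t ≤ (‖x‖ + ‖x - y‖) ^ 2 / t).trans h
  have hexp : -‖x‖ ^ 2 / (4 * s) ≤ ‖x - y‖ ^ 2 / (4 * (t - s)) + -‖y‖ ^ 2 / (4 * t) := by
    simp only [mul_comm (4 : ℝ), ← div_div, neg_div]
    linarith
  have hconst : (4 * π * s) ^ (-(Module.finrank ℝ E : ℝ) / 2)
      = (t / s) ^ ((Module.finrank ℝ E : ℝ) / 2)
        * (4 * π * t) ^ (-(Module.finrank ℝ E : ℝ) / 2) := by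
    rw [show 4 * π * s = 4 * π * t / (t / s) by field_simp,
      Real.div_rpow (by positivity) (by positivity), neg_div,
      Real.rpow_neg (x := t / s) (by positivity), div_inv_eq_mul, mul_comm]
  calc heatKernel s x
      ≤ (4 * π * s) ^ (-(Module.finrank ℝ E : ℝ) / 2)
          * Real.exp (‖x - y‖ ^ 2 / (4 * (t - s)) + -‖y‖ ^ 2 / (4 * t)) := by
        unfold heatKernel; gcongr
    _ = _ := by rw [hconst, Real.exp_add, heatKernel]; ring

end NormedSpace

variable [InnerProductSpace ℝ E] {t : ℝ}

lemma contDiff_heatKernel : ContDiff ℝ 1 (heatKernel (E := E) t) := by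
  unfold heatKernel
  exact contDiff_const.mul (((contDiff_norm_sq ℝ).neg.div_const _).exp)

lemma fderiv_heatKernel (z : E) :
    fderiv ℝ (heatKernel t) z = -(heatKernel t z / (2 * t)) • innerSL ℝ z := by
  have h := ((((hasStrictFDerivAt_norm_sq z).hasFDerivAt.neg.mul_const (4 * t)⁻¹).exp).const_mul
    ((4 * π * t) ^ (-(Module.finrank ℝ E : ℝ) / 2)))
  simp only [← div_eq_mul_inv] at h
  refine h.fderiv.trans ?_
  ext v
  simp only [heatKernel, Pi.neg_apply, _root_.smul_apply, _root_.neg_apply, smul_eq_mul,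
    nsmul_eq_mul]
  ring

lemma norm_fderiv_heatKernel_le (ht : 0 < t) (z : E) :
    ‖fderiv ℝ (heatKernel t) z‖
      ≤ 2 ^ ((Module.finrank ℝ E : ℝ) / 2) / √t * heatKernel (2 * t) z := by
  set σ := ‖z‖ / (2 * √t) with hσ
  have hσ_exp : σ ≤ Real.exp (σ ^ 2 / 2) := by
    nlinarith [Real.add_one_le_exp (σ ^ 2 / 2), sq_nonneg (σ - 1)]
  have hsq : √t ^ 2 = t := Real.sq_sqrt ht.le
  have hfactor : heatKernel t z
      = 2 ^ ((Module.finrank ℝ E : ℝ) / 2) * heatKernel (2 * t) z * Real.exp (-(σ ^ 2 / 2)) := by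
    have hexp : -‖z‖ ^ 2 / (4 * t) = -‖z‖ ^ 2 / (4 * (2 * t)) + -(σ ^ 2 / 2) := by
      rw [hσ, div_pow, mul_pow, hsq]; field_simp; ring
    rw [heatKernel, heatKernel, hexp, Real.exp_add, show 4 * π * (2 * t) = 2 * (4 * π * t) by ring,
      Real.mul_rpow two_pos.le (by positivity), neg_div, Real.rpow_neg two_pos.le]
    field_simp
  have hdecay : σ * Real.exp (-(σ ^ 2 / 2)) ≤ 1 := by
    rw [Real.exp_neg, ← div_eq_mul_inv, div_le_one (Real.exp_pos _)]
    exact hσ_exp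
  calc ‖fderiv ℝ (heatKernel t) z‖
      = heatKernel t z / (2 * t) * ‖z‖ := by
        rw [fderiv_heatKernel, norm_smul, norm_neg, innerSL_apply_norm,
          Real.norm_of_nonneg (div_nonneg (heatKernel_pos ht z).le (by positivity))]
    _ = 2 ^ ((Module.finrank ℝ E : ℝ) / 2) / √t * heatKernel (2 * t) z
          * (σ * Real.exp (-(σ ^ 2 / 2))) := by
        rw [hfactor, hσ]; field_simp; rw [hsq]; ring
    _ ≤ 2 ^ ((Module.finrank ℝ E : ℝ) / 2) / √t * heatKernel (2 * t) z :=
        mul_le_of_le_one_right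
          (mul_nonneg (by positivity) (heatKernel_pos (by positivity) z).le) hdecay

lemma exists_norm_fderiv_heatKernel_le_of_norm_sub_le {s : ℝ} (ht : 0 < t) (hts : 2 * t < s)
    (ρ : ℝ) :
    ∃ C, ∀ x y : E, ‖x - y‖ ≤ ρ → ‖fderiv ℝ (heatKernel t) x‖ ≤ C * heatKernel s y := by
  refine ⟨2 ^ ((Module.finrank ℝ E : ℝ) / 2) / √t * ((s / (2 * t)) ^
    ((Module.finrank ℝ E : ℝ) / 2) * Real.exp (ρ ^ 2 / (4 * (s - 2 * t)))), fun x y hxy => ?_⟩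
  have hs : 0 < s := by linarith
  have hy := heatKernel_pos hs y
  rw [mul_assoc]
  refine (norm_fderiv_heatKernel_le ht x).trans ?_
  gcongr
  refine (heatKernel_le_rpow_mul_exp_mul_heatKernel (by positivity) hts x y).trans ?_
  gcongr

variable [FiniteDimensional ℝ E] [MeasurableSpace E] [BorelSpace E]

lemma integral_heatKernel (ht : 0 < t) : ∫ z : E, heatKernel t z = 1 := by
  have hgauss := GaussianFourier.integral_rexp_neg_mul_sq_norm (V := E) (b := 1 / (4 * t))
    (by positivity)
  simp only [heatKernel, integral_const_mul, neg_div]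
  rw [show (fun z : E => Real.exp (-(‖z‖ ^ 2 / (4 * t))))
      = fun z => Real.exp (-(1 / (4 * t)) * ‖z‖ ^ 2) by ext z; congr 1; ring, hgauss,
    show π / (1 / (4 * t)) = 4 * π * t by field_simp, Real.rpow_neg (by positivity)]
  exact inv_mul_cancel₀ (by positivity)

lemma integrable_heatKernel (ht : 0 < t) : Integrable (heatKernel (E := E) t) :=
  .of_integral_ne_zero (by rw [integral_heatKernel ht]; exact one_ne_zero)

lemma lintegral_heatKernel (ht : 0 < t) : ∫⁻ z : E, ENNReal.ofReal (heatKernel t z) = 1 := by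
  rw [← ofReal_integral_eq_lintegral_ofReal (integrable_heatKernel ht)
    (.of_forall fun z => (heatKernel_pos ht z).le), integral_heatKernel ht, ENNReal.ofReal_one]

lemma memLp_heatKernel_two (ht : 0 < t) : MemLp (heatKernel (E := E) t) 2 := by
  rw [memLp_two_iff_integrable_sq continuous_heatKernel.aestronglyMeasurable]
  simp only [sq]
  refine (integrable_heatKernel ht).bdd_mul (c := heatKernel t (0 : E))
    continuous_heatKernel.aestronglyMeasurable (.of_forall fun z => ?_)
  rw [Real.norm_of_nonneg (heatKernel_pos ht z).le]
  exact heatKernel_le_heatKernel_zero ht z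

lemma integrable_heatKernel_sub_mul (ht : 0 < t) {u : E → ℝ} (hu : MemLp u 2) (x : E) :
    Integrable fun y => heatKernel t (x - y) * u y :=
  ((memLp_heatKernel_two ht).comp_measurePreserving
    (Measure.measurePreserving_sub_left volume x)).integrable_mul hu

lemma hasFDerivAt_integral_heatKernel_sub_mul (ht : 0 < t) {u : E → ℝ} (hu : MemLp u 2) (x₀ : E) :
    HasFDerivAt (fun x => ∫ y, heatKernel t (x - y) * u y)
      (∫ y, u y • fderiv ℝ (heatKernel t) (x₀ - y)) x₀ := by
  obtain ⟨C, hC⟩ := exists_norm_fderiv_heatKernel_le_of_norm_sub_le (E := E) ht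
    (show 2 * t < 3 * t by linarith) 1
  have hbound (y : E) {x : E} (hx : x ∈ ball x₀ 1) :
      ‖u y • fderiv ℝ (heatKernel t) (x - y)‖ ≤ C * ‖heatKernel (3 * t) (x₀ - y) * u y‖ := by
    have hdist : ‖(x - y) - (x₀ - y)‖ ≤ 1 := by
      rw [sub_sub_sub_cancel_right, ← dist_eq_norm]
      exact (mem_ball.1 hx).le
    calc ‖u y • fderiv ℝ (heatKernel t) (x - y)‖
        ≤ ‖u y‖ * (C * heatKernel (3 * t) (x₀ - y)) := by
          rw [norm_smul]
          gcongr
          exact hC _ _ hdist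
      _ = C * ‖heatKernel (3 * t) (x₀ - y) * u y‖ := by
          rw [norm_mul, Real.norm_of_nonneg (heatKernel_pos (by positivity) _).le]; ring
  have hderiv_meas : AEStronglyMeasurable fun y => u y • fderiv ℝ (heatKernel t) (x₀ - y) :=
    hu.1.smul ((contDiff_heatKernel.continuous_fderiv one_ne_zero).comp
      (continuous_sub_left x₀)).aestronglyMeasurable
  refine hasFDerivAt_integral_of_dominated_of_fderiv_le (ball_mem_nhds x₀ one_pos)
    (.of_forall fun x => (integrable_heatKernel_sub_mul ht hu x).1)
    (integrable_heatKernel_sub_mul ht hu x₀) hderiv_meas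
    (.of_forall fun y x hx => hbound y hx)
    ((integrable_heatKernel_sub_mul (by positivity) hu x₀).norm.const_mul C)
    (.of_forall fun y x _ => ?_)
  exact ((contDiff_heatKernel.differentiable one_ne_zero (x - y)).hasFDerivAt.comp x
    ((hasFDerivAt_id x).sub_const y)).mul_const (u y)

end HeatKernel

/-! ### Heat averages of nonnegative functions -/

section HeatAverage

variable {E : Type*} [NormedAddCommGroup E] [InnerProductSpace ℝ E] [FiniteDimensional ℝ E]
  [MeasurableSpace E] [BorelSpace E] {s t : ℝ} {f : E → ℝ≥0∞}

/-- The convolution of the heat kernel at time `t` with a nonnegative function. It takes values in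
`ℝ≥0∞`, so that no integrability has to be assumed. -/
def heatAverage (t : ℝ) (f : E → ℝ≥0∞) (x : E) : ℝ≥0∞ :=
  ∫⁻ y, ENNReal.ofReal (heatKernel t (x - y)) * f y

lemma lintegral_heatAverage (ht : 0 < t) (hf : AEMeasurable f) :
    ∫⁻ x, heatAverage t f x = ∫⁻ y, f y := by
  have hmass (y : E) : ∫⁻ x, ENNReal.ofReal (heatKernel t (x - y)) * f y = f y := by
    rw [lintegral_mul_const _ (by fun_prop),
      lintegral_sub_right_eq_self (fun z : E => ENNReal.ofReal (heatKernel t z)) y,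
      lintegral_heatKernel ht, one_mul]
  unfold heatAverage
  rw [lintegral_lintegral_swap]
  · simp only [hmass]
  · have hkernel : Measurable fun p : E × E => ENNReal.ofReal (heatKernel t (p.1 - p.2)) := by
      fun_prop
    exact hkernel.aemeasurable.mul hf.comp_snd

lemma heatAverage_sq_le (ht : 0 < t) (hf : AEMeasurable f) (x : E) :
    heatAverage t f x ^ 2 ≤ heatAverage t (fun y => f y ^ 2) x := by
  have hmass : ∫⁻ y, ENNReal.ofReal (heatKernel t (x - y)) = 1 := by
    rw [lintegral_sub_left_eq_self (fun z : E => ENNReal.ofReal (heatKernel t z)) x,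
      lintegral_heatKernel ht]
  have h := sq_lintegral_mul_le (μ := volume)
    (w := fun y => ENNReal.ofReal (heatKernel t (x - y))) (by fun_prop) hf
  rwa [hmass, one_mul] at h

/-- The parabolic Harnack inequality, for nonnegative solutions given by the heat kernel. -/
lemma heatAverage_le_mul_heatAverage (hs : 0 < s) (hst : s < t) (f : E → ℝ≥0∞) (x w : E) :
    heatAverage s f x ≤ ENNReal.ofReal ((t / s) ^ ((Module.finrank ℝ E : ℝ) / 2)
      * Real.exp (‖x - w‖ ^ 2 / (4 * (t - s)))) * heatAverage t f w := by
  have ht : 0 < t := hs.trans hst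
  unfold heatAverage
  rw [← lintegral_const_mul' _ _ ofReal_ne_top]
  refine lintegral_mono fun y => ?_
  rw [← mul_assoc, ← ENNReal.ofReal_mul (by positivity)]
  gcongr
  simpa using heatKernel_le_rpow_mul_exp_mul_heatKernel hs hst (x - y) (w - y)

lemma enorm_fderiv_integral_heatKernel_sub_mul_le (ht : 0 < t) {u : E → ℝ} (hu : MemLp u 2)
    (x : E) :
    ‖fderiv ℝ (fun x => ∫ y, heatKernel t (x - y) * u y) x‖ₑ
      ≤ ENNReal.ofReal (2 ^ ((Module.finrank ℝ E : ℝ) / 2) / √t)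
        * heatAverage (2 * t) (fun y => ‖u y‖ₑ) x := by
  rw [(hasFDerivAt_integral_heatKernel_sub_mul ht hu x).fderiv, heatAverage,
    ← lintegral_const_mul' _ _ ofReal_ne_top]
  refine (enorm_integral_le_lintegral_enorm _).trans (lintegral_mono fun y => ?_)
  rw [enorm_smul, mul_comm, ← mul_assoc, ← ENNReal.ofReal_mul (by positivity), ← ofReal_norm]
  gcongr
  exact norm_fderiv_heatKernel_le ht (x - y)

end HeatAverage

/-! ### Sampling on a cubic lattice -/

section Lattice

variable {ι : Type*} {r : ℝ}

/-- The half-open cube of side `r` whose lowest corner is the lattice point `r • n`. Unlike the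
closed cubes of side `2r` centred at the lattice points, these cubes are pairwise disjoint. -/
def latticeCell (r : ℝ) (n : ι → ℤ) : Set (EuclideanSpace ℝ ι) :=
  WithLp.ofLp ⁻¹' Set.univ.pi fun j => Set.Ico (n j • r) ((n j + 1) • r)

/-- The closed cube of side `2r` centred at the lattice point `r • n`. -/
def latticeCube (r : ℝ) (n : ι → ℤ) : Set (EuclideanSpace ℝ ι) :=
  {x | ∀ j, |x j - r * n j| ≤ r}

lemma pairwise_disjoint_latticeCell (r : ℝ) :
    Pairwise (Function.onFun Disjoint (latticeCell (ι := ι) r)) := by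
  intro m n hmn
  obtain ⟨j, hj⟩ := Function.ne_iff.1 hmn
  exact (Set.disjoint_univ_pi.2 ⟨j, Set.pairwise_disjoint_Ico_zsmul r hj⟩).preimage _

lemma measurableSet_latticeCell [Countable ι] (r : ℝ) (n : ι → ℤ) :
    MeasurableSet (latticeCell r n) :=
  WithLp.measurable_ofLp _ _ (.univ_pi fun _ => measurableSet_Ico)

variable [Fintype ι]

lemma volume_latticeCell (r : ℝ) (n : ι → ℤ) :
    volume (latticeCell r n) = ENNReal.ofReal r ^ Fintype.card ι := by
  rw [latticeCell, (PiLp.volume_preserving_ofLp ι).measure_preimage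
    (MeasurableSet.univ_pi fun _ => measurableSet_Ico).nullMeasurableSet, Real.volume_pi_Ico]
  simp [add_mul]

lemma norm_sub_sq_le_of_mem_latticeCube_of_mem_latticeCell {n : ι → ℤ} {x w : EuclideanSpace ℝ ι}
    (hx : x ∈ latticeCube r n) (hw : w ∈ latticeCell r n) :
    ‖x - w‖ ^ 2 ≤ 4 * Fintype.card ι * r ^ 2 := by
  have hcoord (j : ι) : ‖(x - w) j‖ ^ 2 ≤ (2 * r) ^ 2 := by
    obtain ⟨hxl, hxu⟩ := abs_le.1 (hx j)
    obtain ⟨hwl, hwu⟩ := hw j (Set.mem_univ j)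
    rw [zsmul_eq_mul] at hwl hwu
    push_cast at hwu
    rw [PiLp.sub_apply, Real.norm_eq_abs, sq_le_sq₀ (abs_nonneg _) (by linarith), abs_le]
    constructor <;> linarith
  calc ‖x - w‖ ^ 2 = ∑ j, ‖(x - w) j‖ ^ 2 := EuclideanSpace.norm_sq_eq _
    _ ≤ ∑ _j : ι, (2 * r) ^ 2 := Finset.sum_le_sum fun j _ => hcoord j
    _ = 4 * Fintype.card ι * r ^ 2 := by
        simp only [Finset.sum_const, Finset.card_univ, nsmul_eq_mul]; ring

lemma biSup_latticeCube_heatAverage_le {s : ℝ} (hs : 0 < s) (hr : 0 < r)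
    (f : EuclideanSpace ℝ ι → ℝ≥0∞) {n : ι → ℤ} {w : EuclideanSpace ℝ ι}
    (hw : w ∈ latticeCell r n) :
    ⨆ x ∈ latticeCube r n, heatAverage s f x
      ≤ ENNReal.ofReal (((s + r ^ 2) / s) ^ ((Fintype.card ι : ℝ) / 2)
          * Real.exp (Fintype.card ι)) * heatAverage (s + r ^ 2) f w := by
  refine iSup₂_le fun x hx => (heatAverage_le_mul_heatAverage hs (t := s + r ^ 2)
    (lt_add_of_pos_right s (by positivity)) f x w).trans ?_
  have hdist := norm_sub_sq_le_of_mem_latticeCube_of_mem_latticeCell hx hw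
  rw [finrank_euclideanSpace]
  gcongr
  rw [add_sub_cancel_left, div_le_iff₀ (by positivity)]
  linarith

lemma tsum_biSup_latticeCube_heatAverage_le {s : ℝ} (hs : 0 < s) (hr : 0 < r)
    {f : EuclideanSpace ℝ ι → ℝ≥0∞} (hf : AEMeasurable f) :
    ∑' n : ι → ℤ, ⨆ x ∈ latticeCube r n, heatAverage s f x
      ≤ ENNReal.ofReal (Real.exp (Fintype.card ι)
          * (1 / s + 1 / r ^ 2) ^ ((Fintype.card ι : ℝ) / 2)) * ∫⁻ y, f y := by
  set d := Fintype.card ι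
  have hcells := tsum_mul_measure_le_lintegral (μ := volume) (measurableSet_latticeCell r)
    (pairwise_disjoint_latticeCell r)
    fun n w hw => biSup_latticeCube_heatAverage_le hs hr f (n := n) (w := w) hw
  simp only [volume_latticeCell] at hcells
  rw [ENNReal.tsum_mul_right, lintegral_const_mul' _ _ ofReal_ne_top,
    lintegral_heatAverage (by positivity) hf, ← ENNReal.ofReal_pow hr.le,
    ← ENNReal.le_div_iff_mul_le (by simp [hr]) (by simp), ENNReal.mul_div_right_comm,
    ← ENNReal.ofReal_div_of_pos (by positivity)] at hcells
  have hconst : ((s + r ^ 2) / s) ^ ((d : ℝ) / 2) * Real.exp d / r ^ d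
      = Real.exp d * (1 / s + 1 / r ^ 2) ^ ((d : ℝ) / 2) := by
    have hrd : r ^ d = (r ^ 2) ^ ((d : ℝ) / 2) := by
      rw [← Real.rpow_natCast_mul hr.le, ← Real.rpow_natCast]; congr 1; push_cast; ring
    rw [hrd, mul_comm, mul_div_assoc, ← Real.div_rpow (by positivity) (by positivity)]
    congr 2
    field_simp
    ring
  rwa [hconst] at hcells

end Lattice

/-! ### The gradient of the heat solution -/

section HeatSol

variable {d : ℕ} {u₀ : EuclideanSpace ℝ (Fin d) → ℝ} {T r : ℝ}

lemma heatSol_eq_integral_heatKernel :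
    heatSol d u₀ T = fun x => ∫ y, heatKernel T (x - y) * u₀ y := by
  ext x
  simp only [heatSol, heatKernel, finrank_euclideanSpace_fin, mul_assoc, integral_const_mul]

lemma enorm_fderiv_heatSol_sq_le (hu : MemLp u₀ 2) (hT : 0 < T) (x : EuclideanSpace ℝ (Fin d)) :
    ‖fderiv ℝ (heatSol d u₀ T) x‖ₑ ^ 2
      ≤ ENNReal.ofReal (2 ^ d / T) * heatAverage (2 * T) (fun y => ‖u₀ y‖ₑ ^ 2) x := by
  have hconst : (2 ^ ((d : ℝ) / 2) / √T) ^ 2 = 2 ^ d / T := by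
    rw [div_pow, Real.sq_sqrt hT.le, ← Real.rpow_mul_natCast two_pos.le, Nat.cast_ofNat,
      div_mul_cancel₀ _ two_ne_zero, Real.rpow_natCast]
  rw [heatSol_eq_integral_heatKernel]
  calc _ ≤ (ENNReal.ofReal (2 ^ ((d : ℝ) / 2) / √T)
          * heatAverage (2 * T) (fun y => ‖u₀ y‖ₑ) x) ^ 2 := by
        gcongr
        simpa using enorm_fderiv_integral_heatKernel_sub_mul_le hT hu x
    _ = ENNReal.ofReal (2 ^ d / T) * heatAverage (2 * T) (fun y => ‖u₀ y‖ₑ) x ^ 2 := by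
        rw [mul_pow, ← ENNReal.ofReal_pow (by positivity), hconst]
    _ ≤ _ := by
        gcongr
        exact heatAverage_sq_le (by positivity) hu.1.enorm x

lemma tsum_sq_biSup_latticeCube_enorm_fderiv_heatSol_le (hu : MemLp u₀ 2) (hT : 0 < T)
    (hr : 0 < r) :
    ∑' n : Fin d → ℤ, (⨆ x ∈ latticeCube r n, ‖fderiv ℝ (heatSol d u₀ T) x‖ₑ) ^ 2
      ≤ ENNReal.ofReal (2 ^ d / T * (Real.exp d * (1 / (2 * T) + 1 / r ^ 2) ^ ((d : ℝ) / 2)))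
        * eLpNorm u₀ 2 volume ^ 2 := by
  have hnorm : eLpNorm u₀ 2 volume ^ 2 = ∫⁻ y, ‖u₀ y‖ₑ ^ 2 := by
    simpa using eLpNorm_nnreal_pow_eq_lintegral (f := u₀) (μ := volume) (p := 2) two_ne_zero
  calc _ ≤ ∑' n : Fin d → ℤ, ENNReal.ofReal (2 ^ d / T)
          * ⨆ x ∈ latticeCube r n, heatAverage (2 * T) (fun y => ‖u₀ y‖ₑ ^ 2) x := by
        gcongr with n
        simp only [ENNReal.iSup_pow_of_ne_zero two_ne_zero, ENNReal.mul_iSup]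
        gcongr with x
        exact enorm_fderiv_heatSol_sq_le hu hT x
    _ ≤ ENNReal.ofReal (2 ^ d / T) * (ENNReal.ofReal
          (Real.exp d * (1 / (2 * T) + 1 / r ^ 2) ^ ((d : ℝ) / 2)) * ∫⁻ y, ‖u₀ y‖ₑ ^ 2) := by
        rw [ENNReal.tsum_mul_left]
        gcongr
        simpa using tsum_biSup_latticeCube_heatAverage_le (ι := Fin d) (s := 2 * T)
          (by positivity) hr (hu.1.enorm.pow_const 2)
    _ = _ := by rw [← mul_assoc, ← ENNReal.ofReal_mul (by positivity), hnorm]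

lemma sampling_constant_le (hT : 0 < T) (hr : 0 < r) :
    2 ^ d / T * (Real.exp d * (1 / (2 * T) + 1 / r ^ 2) ^ ((d : ℝ) / 2))
      ≤ ((8 * Real.exp 2) ^ ((d : ℝ) / 4) * (1 + (T * r ^ (-(2 : ℝ))) ^ ((d : ℝ) / 4))
          * T ^ (-(d : ℝ) / 4 - 1 / 2)) ^ 2 := by
  have hsq {z : ℝ} (hz : 0 ≤ z) (p : ℝ) : (z ^ p) ^ 2 = z ^ (2 * p) := by
    rw [← Real.rpow_mul_natCast hz, mul_comm, Nat.cast_ofNat]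
  have hTsq : (T ^ (-(d : ℝ) / 4 - 1 / 2)) ^ 2 = T⁻¹ * T ^ (-((d : ℝ) / 2)) := by
    rw [hsq hT.le, ← Real.rpow_neg_one, ← Real.rpow_add hT]; congr 1; ring
  have hCsq : ((8 * Real.exp 2) ^ ((d : ℝ) / 4)) ^ 2
      = 2 ^ d * Real.exp d * (2 ^ ((d : ℝ) / 4)) ^ 2 := by
    rw [hsq (by positivity), hsq (by positivity), Real.mul_rpow (by positivity) (by positivity),
      ← Real.exp_mul, show (8 : ℝ) = 2 ^ 2 * 2 by norm_num,
      Real.mul_rpow (by positivity) (by positivity), ← Real.rpow_natCast_mul (by positivity),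
      ← Real.rpow_natCast 2 d, mul_right_comm]
    congr 4 <;> push_cast <;> ring
  set a := T * r ^ (-(2 : ℝ)) with ha
  have ha0 : 0 ≤ a := by positivity
  have hbase : 1 / (2 * T) + 1 / r ^ 2 ≤ (1 + a) / T := by
    have : 1 / (2 * T) ≤ 1 / T := by gcongr; linarith
    calc _ ≤ 1 / T + 1 / r ^ 2 := by gcongr
      _ = _ := by rw [ha, Real.rpow_neg hr.le, Real.rpow_two]; field_simp
  calc _ ≤ 2 ^ d / T * (Real.exp d * ((1 + a) / T) ^ ((d : ℝ) / 2)) := by gcongr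
    _ = 2 ^ d * Real.exp d * (T ^ (-(d : ℝ) / 4 - 1 / 2)) ^ 2 * ((1 + a) ^ ((d : ℝ) / 4)) ^ 2 := by
        rw [hTsq, hsq (by positivity), Real.div_rpow (by positivity) hT.le, Real.rpow_neg hT.le,
          show 2 * ((d : ℝ) / 4) = d / 2 by ring]
        field_simp
    _ ≤ 2 ^ d * Real.exp d * (T ^ (-(d : ℝ) / 4 - 1 / 2)) ^ 2
          * (2 ^ ((d : ℝ) / 4) * (1 + a ^ ((d : ℝ) / 4))) ^ 2 := by
      gcongr
      exact one_add_rpow_le_two_rpow_mul ha0 (by positivity)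
    _ = _ := by rw [mul_pow, mul_pow, mul_pow, hCsq]; ring

end HeatSol

/-- There is `C = C(d) > 0` such that for every `u₀ ∈ L²(ℝ^d)`, `T > 0` and `r > 0`,
`(Σ_{n ∈ ℤ^d} (sup_{x ∈ Q_r(rn)} |∇_x u(T,x)|)²)^{1/2}
  ≤ C (1 + (T r^{-2})^{d/4}) T^{-d/4 - 1/2} ‖u₀‖`. -/
theorem statement9 (d : ℕ) (hd : 0 < d) :
    ∃ C : ℝ, 0 < C ∧
      ∀ u₀ : EuclideanSpace ℝ (Fin d) → ℝ, MemLp u₀ 2 volume →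
      ∀ T r : ℝ, 0 < T → 0 < r →
        (∑' n : Fin d → ℤ,
            (ENNReal.ofReal (⨆ x ∈ {x : EuclideanSpace ℝ (Fin d) | ∀ j, |x j - r * n j| ≤ r},
              ‖fderiv ℝ (heatSol d u₀ T) x‖)) ^ 2) ^ ((1 : ℝ) / 2)
          ≤ ENNReal.ofReal
              (C * (1 + (T * r ^ (-(2 : ℝ))) ^ ((d : ℝ) / 4)) * T ^ (-(d : ℝ) / 4 - 1 / 2)
                * l2norm d u₀) := by
  refine ⟨(8 * Real.exp 2) ^ ((d : ℝ) / 4), by positivity, fun u₀ hu T r hT hr => ?_⟩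
  set K := (8 * Real.exp 2) ^ ((d : ℝ) / 4) * (1 + (T * r ^ (-(2 : ℝ))) ^ ((d : ℝ) / 4))
    * T ^ (-(d : ℝ) / 4 - 1 / 2)
  have hK : 0 ≤ K := by positivity
  have hnorm : ENNReal.ofReal (l2norm d u₀) = eLpNorm u₀ 2 volume := ofReal_toReal hu.2.ne
  rw [one_div, ENNReal.rpow_inv_le_iff two_pos, ENNReal.rpow_two, ENNReal.ofReal_mul hK, hnorm,
    mul_pow, ← ENNReal.ofReal_pow hK]
  calc _ ≤ ∑' n : Fin d → ℤ, (⨆ x ∈ latticeCube r n, ‖fderiv ℝ (heatSol d u₀ T) x‖ₑ) ^ 2 := by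
        simp only [← ofReal_norm]
        gcongr with n
        exact ofReal_biSup_le (latticeCube r n) _
    _ ≤ _ := tsum_sq_biSup_latticeCube_enorm_fderiv_heatSol_le hu hT hr
    _ ≤ ENNReal.ofReal (K ^ 2) * eLpNorm u₀ 2 volume ^ 2 := by
        gcongr
        exact sampling_constant_le hT hr
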